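/- arXiv:2511.19494 — 6 statements merged into one kernel-verified Lean document; each statement's English description precedes it below -/
import Mathlib

section
/- Let G be a finite nilpotent group and let 0 < ε < 1 be a real number. If k is a natural number with k ≥ rank(G) + ⌈log₂(2/ε)⌉, then φ_k(G) ≥ 1 − ε. -/
/-- `genProb G k` is the probability that `k` independently and uniformly chosen random
elements of the finite group `G` generate `G`, i.e. the number of `k`-tuples whose generated
subgroup is all of `G`, divided by `|G|^k`. -/
noncomputable def genProb (G : Type*) [Group G] (k : ℕ) : ℝ :=
  (Nat.card {v : Fin k → G // Subgroup.closure (Set.range v) = ⊤} : ℝ) /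
    (Nat.card G : ℝ) ^ k

/-- The quotient of a group by a normal maximal subgroup is simple. -/
theorem IsCoatom.isSimpleGroup_quotient {G : Type*} [Group G] {M : Subgroup G} [M.Normal]
    (hM : IsCoatom M) : IsSimpleGroup (G ⧸ M) where
  exists_pair_ne := (QuotientGroup.nontrivial_iff.mpr hM.1).exists_pair_ne
  eq_bot_or_eq_top_of_normal H _ := by
    have hsurj := QuotientGroup.mk'_surjective M
    have hle : M ≤ H.comap (QuotientGroup.mk' M) := QuotientGroup.le_comap_mk' M H
    rw [← Subgroup.map_comap_eq_self_of_surjective hsurj H]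
    rcases hM.le_iff.mp hle with h | h
    · right
      rw [h, ← MonoidHom.range_eq_map, MonoidHom.range_eq_top.mpr hsurj]
    · left
      rw [h, QuotientGroup.map_mk'_self]

/-- A proper subgroup of a finite nilpotent group lies in the kernel of a nontrivial homomorphism
onto a cyclic group of prime order. -/
theorem Subgroup.exists_le_ker_of_ne_top {G : Type*} [Group G] [Finite G] [Group.IsNilpotent G]
    {H : Subgroup G} (hH : H ≠ ⊤) :
    ∃ p ∈ (Nat.card G).primeFactors, ∃ f : G →* Multiplicative (ZMod p), f ≠ 1 ∧ H ≤ f.ker := by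
  obtain ⟨M, hM, hHM⟩ := (eq_top_or_exists_le_coatom H).resolve_left hH
  have : M.Normal :=
    NormalizerCondition.normal_of_coatom M Group.normalizerCondition_of_isNilpotent hM
  have : IsSimpleGroup (G ⧸ M) := hM.isSimpleGroup_quotient
  let : CommGroup (G ⧸ M) :=
    { mul_comm := IsSimpleGroup.comm_iff_isSolvable.mpr inferInstance }
  have hp : (Nat.card (G ⧸ M)).Prime := IsSimpleGroup.prime_card
  have : Fact (Nat.card (G ⧸ M)).Prime := ⟨hp⟩
  let e : G ⧸ M ≃* Multiplicative (ZMod (Nat.card (G ⧸ M))) :=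
    mulEquivOfPrimeCardEq (p := Nat.card (G ⧸ M)) rfl (by simp)
  let f : G →* Multiplicative (ZMod (Nat.card (G ⧸ M))) := .comp e (QuotientGroup.mk' M)
  have hker : f.ker = M := by
    rw [MonoidHom.ker_mulEquiv_comp, QuotientGroup.ker_mk']
  refine ⟨_, Nat.mem_primeFactors.mpr ⟨hp, M.card_quotient_dvd_card, Nat.card_pos.ne'⟩,
    f, fun h ↦ hM.1 ?_, hker.symm ▸ hHM⟩
  rw [← hker, h, MonoidHom.ker_one]

/-- A homomorphism is determined by its values on a minimal generating set. -/
theorem MonoidHom.card_le_card_pow_rank (G A : Type*) [Group G] [Group.FG G] [Group A] [Finite A] :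
    Nat.card (G →* A) ≤ Nat.card A ^ Group.rank G := by
  obtain ⟨S, hS, hcl⟩ := Group.rank_spec G
  have hinj : Function.Injective fun (f : G →* A) (s : S) ↦ f s := fun f g h ↦
    MonoidHom.eq_of_eqOn_dense hcl fun s hs ↦ congrFun h ⟨s, hs⟩
  simpa [Nat.card_fun, hS] using Nat.card_le_card_of_injective _ hinj

/-- The kernel of a nontrivial homomorphism to a cyclic group of prime order `p` has index `p`. -/
theorem MonoidHom.index_ker_of_ne_one {G : Type*} [Group G] {p : ℕ} [Fact p.Prime]
    {f : G →* Multiplicative (ZMod p)} (hf : f ≠ 1) : f.ker.index = p := by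
  have hcard : Nat.card (Multiplicative (ZMod p)) = p := by simp
  have : Fact (Nat.card (Multiplicative (ZMod p))).Prime := by rwa [hcard]
  rw [Subgroup.index_ker, (f.range.eq_bot_or_eq_top_of_prime_card).resolve_left
    (mt MonoidHom.range_eq_bot_iff.mp hf), Subgroup.card_top, hcard]

/-- The number of tuples with entries in a subgroup. -/
theorem Subgroup.ncard_forall_mem {G : Type*} [Group G] (H : Subgroup G) (k : ℕ) :
    {v : Fin k → G | ∀ i, v i ∈ H}.ncard = Nat.card H ^ k := by
  rw [← Nat.card_coe_set_eq, Set.coe_ofPred,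
    Nat.card_congr (Equiv.subtypePiEquivPi (p := fun _ : Fin k ↦ (· ∈ H)))]
  simp [Nat.card_fun]

/-- Union bound for the number of tuples that fail to generate a finite nilpotent group. -/
theorem ncard_closure_range_ne_top_le (G : Type*) [Group G] [Finite G] [Group.IsNilpotent G]
    (k : ℕ) :
    ({v : Fin k → G | Subgroup.closure (Set.range v) ≠ ⊤}.ncard : ℝ) ≤
      ∑ p ∈ (Nat.card G).primeFactors,
        (p : ℝ) ^ Group.rank G * ((Nat.card G : ℝ) / p) ^ k := by
  have hsub : {v : Fin k → G | Subgroup.closure (Set.range v) ≠ ⊤} ⊆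
      ⋃ p ∈ (Nat.card G).primeFactors, ⋃ f ∈ {f : G →* Multiplicative (ZMod p) | f ≠ 1},
        {v : Fin k → G | ∀ i, v i ∈ f.ker} := by
    intro v hv
    obtain ⟨p, hp, f, hf, hle⟩ := Subgroup.exists_le_ker_of_ne_top hv
    simp only [Set.mem_iUnion]
    exact ⟨p, hp, f, hf, fun i ↦ hle (Subgroup.subset_closure ⟨i, rfl⟩)⟩
  have hunion := (Set.ncard_le_ncard hsub).trans (Finset.set_ncard_biUnion_le _ _)
  refine (Nat.cast_le.mpr hunion).trans ?_
  rw [Nat.cast_sum]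
  refine Finset.sum_le_sum fun p hp ↦ ?_
  have : Fact p.Prime := ⟨Nat.prime_of_mem_primeFactors hp⟩
  have hp0 : (p : ℝ) ≠ 0 := Nat.cast_ne_zero.mpr (Nat.prime_of_mem_primeFactors hp).ne_zero
  have hfin : Finite (G →* Multiplicative (ZMod p)) := DFunLike.finite _
  let F : Finset (G →* Multiplicative (ZMod p)) :=
    (Set.toFinite {f : G →* Multiplicative (ZMod p) | f ≠ 1}).toFinset
  have hFcard : (F.card : ℝ) ≤ (p : ℝ) ^ Group.rank G := by
    have h := MonoidHom.card_le_card_pow_rank G (Multiplicative (ZMod p))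
    have hF : F.card ≤ Nat.card (G →* Multiplicative (ZMod p)) := by
      rw [← Set.ncard_coe_finset]
      exact Set.ncard_le_card _
    have hcard : Nat.card (Multiplicative (ZMod p)) = p := by simp
    rw [hcard] at h
    exact_mod_cast hF.trans h
  have hterm : ∀ f ∈ F, ({v : Fin k → G | ∀ i, v i ∈ f.ker}.ncard : ℝ) =
      ((Nat.card G : ℝ) / p) ^ k := by
    intro f hf
    have hf1 : f ≠ 1 := by simpa [F] using hf
    have h := f.ker.card_mul_index
    rw [MonoidHom.index_ker_of_ne_one hf1] at h
    rw [Subgroup.ncard_forall_mem, ← h, Nat.cast_mul, mul_div_cancel_right₀ _ hp0, Nat.cast_pow]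
  have hle : (⋃ f ∈ {f : G →* Multiplicative (ZMod p) | f ≠ 1},
      {v : Fin k → G | ∀ i, v i ∈ f.ker}).ncard ≤
      ∑ f ∈ F, {v : Fin k → G | ∀ i, v i ∈ f.ker}.ncard := by
    simpa [F] using Finset.set_ncard_biUnion_le F fun f ↦ {v : Fin k → G | ∀ i, v i ∈ f.ker}
  calc _ ≤ ((∑ f ∈ F, {v : Fin k → G | ∀ i, v i ∈ f.ker}.ncard : ℕ) : ℝ) := Nat.cast_le.mpr hle
    _ = F.card * ((Nat.card G : ℝ) / p) ^ k := by
      rw [Nat.cast_sum, Finset.sum_congr rfl hterm, Finset.sum_const, nsmul_eq_mul]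
    _ ≤ _ := by gcongr

theorem sum_range_two_div_odd_sq_le (n : ℕ) :
    ∑ j ∈ Finset.range n, (2 / ((2 * j + 3 : ℕ) : ℝ)) ^ 2 ≤ 1 - 1 / ((n : ℝ) + 1) := by
  induction n with
  | zero => simp
  | succ n ih =>
    rw [Finset.sum_range_succ]
    have h : (2 / ((2 * n + 3 : ℕ) : ℝ)) ^ 2 ≤ 1 / ((n : ℝ) + 1) - 1 / ((n : ℝ) + 1 + 1) := by
      push_cast
      rw [div_sub_div _ _ (by positivity) (by positivity), div_pow,
        div_le_div_iff₀ (by positivity) (by positivity)]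
      nlinarith
    push_cast at h ih ⊢
    linarith

/-- The sum of `(2 / p) ^ 2` over any finite set of primes is at most `2`. -/
theorem sum_two_div_prime_sq_le (S : Finset ℕ) (hS : ∀ p ∈ S, p.Prime) :
    ∑ p ∈ S, (2 / (p : ℝ)) ^ 2 ≤ 2 := by
  let N := S.sup id
  let T : Finset ℕ := (Finset.range N).image fun j ↦ 2 * j + 3
  have hsub : S ⊆ insert 2 T := by
    intro p hp
    have hle : p ≤ N := Finset.le_sup (f := id) hp
    rcases (hS p hp).eq_two_or_odd with rfl | hodd
    · exact Finset.mem_insert_self _ _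
    · have h2 := (hS p hp).two_le
      exact Finset.mem_insert_of_mem <| Finset.mem_image.mpr
        ⟨(p - 3) / 2, Finset.mem_range.mpr (by omega), by omega⟩
  have h2T : 2 ∉ T := by
    simp only [T, Finset.mem_image, not_exists, not_and]
    omega
  calc ∑ p ∈ S, (2 / (p : ℝ)) ^ 2 ≤ ∑ p ∈ insert 2 T, (2 / (p : ℝ)) ^ 2 :=
        Finset.sum_le_sum_of_subset_of_nonneg hsub fun _ _ _ ↦ by positivity
    _ = 1 + ∑ j ∈ Finset.range N, (2 / ((2 * j + 3 : ℕ) : ℝ)) ^ 2 := by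
        rw [Finset.sum_insert h2T, Finset.sum_image fun a _ b _ h ↦ by simpa using h]
        norm_num
    _ ≤ 2 := by
        have h := sum_range_two_div_odd_sq_le N
        have : (0 : ℝ) ≤ 1 / ((N : ℝ) + 1) := by positivity
        linarith

theorem sum_inv_prime_pow_le (S : Finset ℕ) (hS : ∀ p ∈ S, p.Prime) {m : ℕ} (hm : 2 ≤ m) :
    ∑ p ∈ S, (1 / (p : ℝ)) ^ m ≤ 2 / 2 ^ m := by
  have hterm : ∀ p ∈ S, (1 / (p : ℝ)) ^ m ≤ (2 / (p : ℝ)) ^ 2 / 2 ^ m := by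
    intro p hp
    have h2 : (2 : ℝ) ≤ p := by exact_mod_cast (hS p hp).two_le
    have hle : (2 / (p : ℝ)) ^ m ≤ (2 / (p : ℝ)) ^ 2 :=
      pow_le_pow_of_le_one (by positivity) ((div_le_one (by linarith)).mpr h2) hm
    calc (1 / (p : ℝ)) ^ m = (2 / (p : ℝ)) ^ m / 2 ^ m := by
          rw [← div_pow, div_right_comm, div_self two_ne_zero]
      _ ≤ _ := by gcongr
  refine (Finset.sum_le_sum hterm).trans ?_
  rw [← Finset.sum_div]
  gcongr
  exact sum_two_div_prime_sq_le S hS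

theorem one_sub_genProb (G : Type*) [Group G] [Finite G] (k : ℕ) :
    1 - genProb G k =
      ({v : Fin k → G | Subgroup.closure (Set.range v) ≠ ⊤}.ncard : ℝ) / (Nat.card G : ℝ) ^ k := by
  have h := Set.ncard_add_ncard_compl {v : Fin k → G | Subgroup.closure (Set.range v) = ⊤}
  rw [Nat.card_fun, Nat.card_fin, ← Nat.card_coe_set_eq] at h
  have h0 : (Nat.card G : ℝ) ^ k ≠ 0 := pow_ne_zero _ (Nat.cast_ne_zero.mpr Nat.card_pos.ne')
  rw [genProb, eq_div_iff h0, sub_mul, div_mul_cancel₀ _ h0, one_mul, ← Nat.cast_pow, ← h,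
    Nat.cast_add]
  exact add_sub_cancel_left _ _

theorem nilpotent_genProb_rank_bound (G : Type*) [Group G] [Finite G] [Group.IsNilpotent G]
    (ε : ℝ) (hε0 : 0 < ε) (hε1 : ε < 1) (k : ℕ)
    (hk : (Group.rank G : ℤ) + ⌈Real.logb 2 (2 / ε)⌉ ≤ (k : ℤ)) :
    1 - ε ≤ genProb G k := by
  have hlog : 1 < Real.logb 2 (2 / ε) := by
    rw [Real.lt_logb_iff_rpow_lt one_lt_two (by positivity), Real.rpow_one, lt_div_iff₀ hε0]
    linarith
  have hceil : 1 < ⌈Real.logb 2 (2 / ε)⌉ := Int.lt_ceil.mpr (by exact_mod_cast hlog)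
  obtain ⟨m, rfl⟩ : ∃ m, k = Group.rank G + m := Nat.exists_eq_add_of_le (by omega)
  have hm : 2 ≤ m := by omega
  have hlogm : Real.logb 2 (2 / ε) ≤ m := by
    exact_mod_cast Int.ceil_le.mp (show ⌈Real.logb 2 (2 / ε)⌉ ≤ (m : ℤ) by omega)
  have hpow : 2 / ε ≤ 2 ^ m := by
    rwa [Real.logb_le_iff_le_rpow one_lt_two (by positivity), Real.rpow_natCast] at hlogm
  have hG : (0 : ℝ) < Nat.card G := Nat.cast_pos.mpr Nat.card_pos
  have hbound : 1 - genProb G (Group.rank G + m) ≤ ε := by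
    rw [one_sub_genProb, div_le_iff₀ (by positivity)]
    calc _ ≤ _ := ncard_closure_range_ne_top_le G _
      _ = (∑ p ∈ (Nat.card G).primeFactors, (1 / (p : ℝ)) ^ m) *
          (Nat.card G : ℝ) ^ (Group.rank G + m) := by
        rw [Finset.sum_mul]
        refine Finset.sum_congr rfl fun p hp ↦ ?_
        have hp0 : (p : ℝ) ≠ 0 := Nat.cast_ne_zero.mpr (Nat.prime_of_mem_primeFactors hp).ne_zero
        rw [div_pow, div_pow, pow_add (p : ℝ)]
        field_simp
        simp
      _ ≤ ε * (Nat.card G : ℝ) ^ (Group.rank G + m) := by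
        gcongr
        refine (sum_inv_prime_pow_le _ (fun _ ↦ Nat.prime_of_mem_primeFactors) hm).trans ?_
        rw [div_le_iff₀ (by positivity)]
        rwa [div_le_iff₀' hε0] at hpow
  linarith
end

section
/- Let G be a finite nilpotent group and let 0 < ε < 1 be a real number. If k is a natural number with k ≥ Ω(|G|) + ⌈log₂(1/ε)⌉, then φ_k(G) ≥ 1 − ε. -/
open ArithmeticFunction (cardFactors)

lemma cardFactors_card_lt_of_lt {G : Type*} [Group G] [Finite G] {H K : Subgroup G} (h : H < K) :
    cardFactors (Nat.card H) < cardFactors (Nat.card K) := by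
  obtain ⟨c, hc⟩ := Subgroup.card_dvd_of_le h.le
  have hK : Nat.card K ≠ 0 := Nat.card_pos.ne'
  have hH : Nat.card H ≠ 0 := Nat.card_pos.ne'
  have hc0 : c ≠ 0 := by rintro rfl; simp_all
  have hc1 : c ≠ 1 := by
    rintro rfl
    exact h.ne (Subgroup.eq_of_le_of_card_ge h.le (by rw [hc, mul_one]))
  rw [hc, ArithmeticFunction.cardFactors_mul hH hc0]
  have : 0 < cardFactors c := by
    rw [Nat.pos_iff_ne_zero, Ne, ArithmeticFunction.cardFactors_eq_zero_iff_eq_zero_or_one]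
    tauto
  omega

/-- A finite group is generated by at most `Ω(|G|)` elements. -/
lemma exists_generating_finset_card_le_cardFactors (G : Type*) [Group G] [Finite G] :
    ∃ S : Finset G, S.card ≤ cardFactors (Nat.card G) ∧
      Subgroup.closure (S : Set G) = ⊤ := by
  classical
  have key : ∀ j : ℕ, ∃ S : Finset G, S.card ≤ j ∧ (Subgroup.closure (S : Set G) = ⊤ ∨
      j ≤ cardFactors (Nat.card (Subgroup.closure (S : Set G)))) := by
    intro j
    induction j with
    | zero => exact ⟨∅, by simp⟩
    | succ j ih =>
      obtain ⟨S, hSc, hS⟩ := ih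
      by_cases htop : Subgroup.closure (S : Set G) = ⊤
      · exact ⟨S, by omega, Or.inl htop⟩
      obtain ⟨x, hx⟩ : ∃ x, x ∉ Subgroup.closure (S : Set G) := by
        by_contra! hall
        exact htop ((Subgroup.eq_top_iff' _).2 hall)
      refine ⟨insert x S, (Finset.card_insert_le _ _).trans (by omega), Or.inr ?_⟩
      have hlt : Subgroup.closure (S : Set G) <
          Subgroup.closure ((insert x S : Finset G) : Set G) := by
        refine lt_of_le_of_ne (Subgroup.closure_mono (by simp)) fun heq => hx ?_
        rw [heq]
        exact Subgroup.subset_closure (by simp)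
      have := cardFactors_card_lt_of_lt hlt
      have := hS.resolve_left htop
      omega
  obtain ⟨S, hSc, hS⟩ := key (cardFactors (Nat.card G))
  refine ⟨S, hSc, hS.elim id fun h => ?_⟩
  by_contra hne
  have := cardFactors_card_lt_of_lt (lt_top_iff_ne_top.2 hne)
  rw [Subgroup.card_top] at this
  omega

/-- There are at most `|N| ^ Ω(|G / N|)` retractions of `G` onto a normal subgroup `N`. -/
lemma card_retraction_le {G : Type*} [Group G] [Finite G] (N : Subgroup G) [N.Normal] :
    Nat.card {f : G →* N // ∀ n : N, f n = n} ≤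
      Nat.card N ^ cardFactors (Nat.card (G ⧸ N)) := by
  obtain ⟨S, hSc, hS⟩ := exists_generating_finset_card_le_cardFactors (G ⧸ N)
  let φ : {f : G →* N // ∀ n : N, f n = n} → (S → N) := fun f s => f.1 (Quotient.out s.1)
  have hφ : Function.Injective φ := by
    rintro ⟨f, hf⟩ ⟨g, hg⟩ hfg
    have hN : N ≤ f.eqLocus g := fun n hn => (hf ⟨n, hn⟩).trans (hg ⟨n, hn⟩).symm
    have hmap : (f.eqLocus g).map (QuotientGroup.mk' N) = ⊤ := by
      rw [eq_top_iff, ← hS, Subgroup.closure_le]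
      intro s hs
      exact ⟨Quotient.out s, congrFun hfg ⟨s, hs⟩, Quotient.out_eq s⟩
    have htop : f.eqLocus g = ⊤ := by
      have := Subgroup.comap_map_eq (QuotientGroup.mk' N) (f.eqLocus g)
      rw [hmap, Subgroup.comap_top, QuotientGroup.ker_mk', sup_eq_left.2 hN] at this
      exact this.symm
    exact Subtype.ext (MonoidHom.eq_of_eqOn_top fun x _ => by
      have : x ∈ f.eqLocus g := htop ▸ Subgroup.mem_top x
      exact this)
  calc _ ≤ Nat.card (S → N) := Nat.card_le_card_of_injective φ hφ
    _ = Nat.card N ^ S.card := by simp [Nat.card_fun]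
    _ ≤ _ := Nat.pow_le_pow_right Nat.card_pos hSc

/-- A complement of a central subgroup is the kernel of a retraction onto that subgroup. -/
lemma exists_retraction_of_sup_eq_top {G : Type*} [Group G] {N H : Subgroup G}
    (hN : N ≤ Subgroup.center G) (hsup : H ⊔ N = ⊤) (hinf : H ⊓ N = ⊥) :
    ∃ f : G →* N, (∀ n : N, f n = n) ∧ H ≤ f.ker := by
  have hH : H.Normal := by
    rw [← Subgroup.normalizer_eq_top_iff, eq_top_iff, ← hsup]
    exact sup_le Subgroup.le_normalizer (hN.trans (Subgroup.center_le_normalizer _))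
  have hinj : Function.Injective ((QuotientGroup.mk' H).comp N.subtype) := by
    rw [injective_iff_map_eq_one]
    intro n hn
    have hnH : (n : G) ∈ H := (QuotientGroup.eq_one_iff _).1 hn
    have : (n : G) ∈ H ⊓ N := ⟨hnH, n.2⟩
    rw [hinf, Subgroup.mem_bot] at this
    exact Subtype.ext this
  have hsurj : Function.Surjective ((QuotientGroup.mk' H).comp N.subtype) := by
    intro q
    obtain ⟨g, rfl⟩ := QuotientGroup.mk'_surjective H q
    have hg : g ∈ N ⊔ H := by rw [sup_comm, hsup]; trivial
    obtain ⟨n, hn, h, hh, rfl⟩ := Subgroup.mem_sup_of_normal_right.1 hg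
    refine ⟨⟨n, hn⟩, ?_⟩
    simpa [QuotientGroup.eq_one_iff] using hh
  let e := MulEquiv.ofBijective _ ⟨hinj, hsurj⟩
  refine ⟨e.symm.toMonoidHom.comp (QuotientGroup.mk' H), fun n => e.symm_apply_apply n, ?_⟩
  intro h hh
  have : (QuotientGroup.mk' H) h = 1 := (QuotientGroup.eq_one_iff _).2 hh
  simp only [MonoidHom.mem_ker, MonoidHom.comp_apply, this, map_one]

/-- A tuple that generates modulo a central subgroup of prime order, but does not generate,
lies in the kernel of a retraction onto that subgroup. -/
lemma exists_retraction_of_closure_ne_top {G : Type*} [Group G] {N : Subgroup G} [N.Normal]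
    (hN : N ≤ Subgroup.center G) (hp : (Nat.card N).Prime) {k : ℕ} {v : Fin k → G}
    (hv : Subgroup.closure (Set.range v) ≠ ⊤)
    (hq : Subgroup.closure (Set.range fun i => (v i : G ⧸ N)) = ⊤) :
    ∃ f : {f : G →* N // ∀ n : N, f n = n}, ∀ i, f.1 (v i) = 1 := by
  set H := Subgroup.closure (Set.range v) with hHdef
  have hmap : H.map (QuotientGroup.mk' N) = ⊤ := by
    rw [hHdef, MonoidHom.map_closure, ← Set.range_comp]
    exact hq
  have hsup : H ⊔ N = ⊤ := by
    have := Subgroup.comap_map_eq (QuotientGroup.mk' N) H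
    rw [hmap, Subgroup.comap_top, QuotientGroup.ker_mk'] at this
    exact this.symm
  have hinf : H ⊓ N = ⊥ := by
    have : Fact (Nat.card N).Prime := ⟨hp⟩
    rcases Subgroup.eq_bot_or_eq_top_of_prime_card (H.subgroupOf N) with h | h
    · exact (Subgroup.subgroupOf_eq_bot.1 h).eq_bot
    · rw [sup_eq_left.2 (Subgroup.subgroupOf_eq_top.1 h)] at hsup
      exact absurd hsup hv
  obtain ⟨f, hf, hker⟩ := exists_retraction_of_sup_eq_top hN hsup hinf
  exact ⟨⟨f, hf⟩, fun i => hker (Subgroup.subset_closure ⟨i, rfl⟩)⟩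

lemma card_not_generating_le_of_central {G : Type*} [Group G] [Finite G] (N : Subgroup G)
    [N.Normal] (hN : N ≤ Subgroup.center G) (hp : (Nat.card N).Prime) (k : ℕ) :
    Nat.card {v : Fin k → G // Subgroup.closure (Set.range v) ≠ ⊤} ≤
      Nat.card {v : Fin k → G ⧸ N // Subgroup.closure (Set.range v) ≠ ⊤} * Nat.card N ^ k +
        Nat.card N ^ cardFactors (Nat.card (G ⧸ N)) * Nat.card (G ⧸ N) ^ k := by
  classical
  let B := {v : Fin k → G ⧸ N // Subgroup.closure (Set.range v) ≠ ⊤}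
  let T := {f : G →* N // ∀ n : N, f n = n}
  let q : (Fin k → G) → (Fin k → G ⧸ N) := fun v i => (v i : G ⧸ N)
  let r : (Fin k → G) → (Fin k → N) := fun v i =>
    ⟨(q v i).out⁻¹ * v i, QuotientGroup.eq.1 (QuotientGroup.out_eq' (q v i))⟩
  have : Finite T := Finite.of_injective (fun f : T => (f.1 : G → N))
    fun f g h => Subtype.ext (DFunLike.coe_injective h)
  let φ : {v : Fin k → G // Subgroup.closure (Set.range v) ≠ ⊤} →
      (B × (Fin k → N)) ⊕ (T × (Fin k → G ⧸ N)) := fun v =>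
    if h : Subgroup.closure (Set.range (q v)) = ⊤ then
      Sum.inr ((exists_retraction_of_closure_ne_top hN hp v.2 h).choose, q v)
    else Sum.inl (⟨q v, h⟩, r v)
  have hφ : Function.Injective φ := by
    rintro ⟨v, hv⟩ ⟨w, hw⟩ hvw
    rw [Subtype.mk.injEq]
    funext i
    simp only [φ] at hvw
    split_ifs at hvw with h₁ h₂ h₂
    · have hf := (exists_retraction_of_closure_ne_top hN hp hv h₁).choose_spec i
      have hg := (exists_retraction_of_closure_ne_top hN hp hw h₂).choose_spec i
      simp only [Sum.inr.injEq, Prod.mk.injEq] at hvw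
      rw [hvw.1] at hf
      generalize (exists_retraction_of_closure_ne_top hN hp hw h₂).choose = f at hf hg
      have hmem : (v i)⁻¹ * w i ∈ N := QuotientGroup.eq.1 (congrFun hvw.2 i)
      have h1 := f.2 ⟨_, hmem⟩
      simp only [map_mul, map_inv, hf, hg] at h1
      have h2 : (v i)⁻¹ * w i = 1 := by simpa using (congrArg Subtype.val h1).symm
      exact inv_mul_eq_one.1 h2
    · simp only [Sum.inl.injEq, Prod.mk.injEq] at hvw
      have hq : q v i = q w i := congrFun (congrArg Subtype.val hvw.1) i
      have hr : (q v i).out⁻¹ * v i = (q w i).out⁻¹ * w i :=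
        congrArg Subtype.val (congrFun hvw.2 i)
      rw [hq] at hr
      exact mul_left_cancel hr
  calc _ ≤ Nat.card ((B × (Fin k → N)) ⊕ (T × (Fin k → G ⧸ N))) :=
        Nat.card_le_card_of_injective φ hφ
    _ = Nat.card B * Nat.card N ^ k + Nat.card T * Nat.card (G ⧸ N) ^ k := by
        simp [Nat.card_sum, Nat.card_prod, Nat.card_fun]
    _ ≤ _ := by gcongr; exact card_retraction_le N

lemma exists_central_subgroup_card_prime (G : Type*) [Group G] [Finite G] [Nontrivial G]
    [Group.IsNilpotent G] :
    ∃ N : Subgroup G, N ≤ Subgroup.center G ∧ (Nat.card N).Prime := by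
  have hcard : Nat.card (Subgroup.center G) ≠ 1 := by
    rw [Ne, Subgroup.card_eq_one]
    exact Group.IsNilpotent.center_ne_bot G
  obtain ⟨p, hp, hdvd⟩ := Nat.exists_prime_and_dvd hcard
  have : Fact p.Prime := ⟨hp⟩
  obtain ⟨z, hz⟩ := exists_prime_orderOf_dvd_card' p hdvd
  refine ⟨Subgroup.zpowers (z : G), ?_, ?_⟩
  · exact Subgroup.zpowers_le.2 z.2
  · rwa [Nat.card_zpowers, Subgroup.orderOf_coe, hz]

/-- For `k ≥ Ω(|G|)`, a proportion of at most `2 ^ (Ω(|G|) - k)` of all `k`-tuples of elements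
of a finite nilpotent group `G` fail to generate `G`. -/
lemma card_not_generating_mul_two_pow_le (G : Type*) [Group G] [Finite G] [Group.IsNilpotent G]
    (k : ℕ) (hk : cardFactors (Nat.card G) ≤ k) :
    Nat.card {v : Fin k → G // Subgroup.closure (Set.range v) ≠ ⊤} * 2 ^ k ≤
      2 ^ cardFactors (Nat.card G) * Nat.card G ^ k := by
  induction hn : Nat.card G using Nat.strong_induction_on generalizing G with
  | _ n ih =>
  subst hn
  rcases subsingleton_or_nontrivial G with hG | hG
  · have : IsEmpty {v : Fin k → G // Subgroup.closure (Set.range v) ≠ ⊤} :=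
      ⟨fun v => v.2 (Subsingleton.elim _ _)⟩
    simp
  obtain ⟨N, hN, hp⟩ := exists_central_subgroup_card_prime G
  have hNn : N.Normal := ⟨fun n hn g => by
    rw [Subgroup.mem_center_iff.1 (hN hn) g, mul_inv_cancel_right]
    exact hn⟩
  have hcard := Subgroup.card_eq_card_quotient_mul_card_subgroup N
  have hΩ : cardFactors (Nat.card G) = cardFactors (Nat.card (G ⧸ N)) + 1 := by
    rw [hcard, ArithmeticFunction.cardFactors_mul Nat.card_pos.ne' hp.ne_zero,
      ArithmeticFunction.cardFactors_apply_prime hp]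
  have hlt : Nat.card (G ⧸ N) < Nat.card G := by
    rw [hcard]
    exact lt_mul_of_one_lt_right Nat.card_pos hp.one_lt
  have hQ := ih _ hlt (G ⧸ N) (by omega) rfl
  have hle := card_not_generating_le_of_central N hN hp k
  rw [hΩ] at hk ⊢
  rw [hcard]
  generalize Nat.card {v : Fin k → G // Subgroup.closure (Set.range v) ≠ ⊤} = b at *
  generalize Nat.card {v : Fin k → G ⧸ N // Subgroup.closure (Set.range v) ≠ ⊤} = c at *
  generalize cardFactors (Nat.card (G ⧸ N)) = m at *
  generalize Nat.card (G ⧸ N) = q at *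
  generalize Nat.card N = p at *
  obtain ⟨d, rfl⟩ := Nat.exists_eq_add_of_le (show m ≤ k by omega)
  have hpow : p ^ m * 2 ^ (m + d) ≤ 2 ^ m * p ^ (m + d) := by
    have : 2 ^ d ≤ p ^ d := Nat.pow_le_pow_left hp.two_le d
    calc p ^ m * 2 ^ (m + d) = p ^ m * 2 ^ m * 2 ^ d := by ring
      _ ≤ p ^ m * 2 ^ m * p ^ d := by gcongr
      _ = _ := by ring
  calc b * 2 ^ (m + d) ≤ (c * p ^ (m + d) + p ^ m * q ^ (m + d)) * 2 ^ (m + d) := by gcongr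
    _ = c * 2 ^ (m + d) * p ^ (m + d) + p ^ m * 2 ^ (m + d) * q ^ (m + d) := by ring
    _ ≤ 2 ^ m * q ^ (m + d) * p ^ (m + d) + 2 ^ m * p ^ (m + d) * q ^ (m + d) := by gcongr
    _ = 2 ^ (m + 1) * (q * p) ^ (m + d) := by ring

lemma genProb_eq_one_sub (G : Type*) [Group G] [Finite G] (k : ℕ) :
    genProb G k = 1 - (Nat.card {v : Fin k → G // Subgroup.closure (Set.range v) ≠ ⊤} : ℝ) /
      (Nat.card G : ℝ) ^ k := by
  classical
  have hsum : Nat.card {v : Fin k → G // Subgroup.closure (Set.range v) = ⊤} +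
      Nat.card {v : Fin k → G // Subgroup.closure (Set.range v) ≠ ⊤} = Nat.card G ^ k := by
    rw [← Nat.card_sum, Nat.card_congr (Equiv.sumCompl _), Nat.card_fun, Nat.card_fin]
  have hpos : (0 : ℝ) < (Nat.card G : ℝ) ^ k := pow_pos (Nat.cast_pos.2 Nat.card_pos) k
  rw [genProb, eq_sub_iff_add_eq, ← add_div, div_eq_one_iff_eq hpos.ne']
  exact_mod_cast hsum

theorem nilpotent_genProb_len_bound (G : Type*) [Group G] [Finite G] [Group.IsNilpotent G]
    (ε : ℝ) (hε0 : 0 < ε) (hε1 : ε < 1) (k : ℕ)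
    (hk : ((Nat.card G).primeFactorsList.length : ℤ) + ⌈Real.logb 2 (1 / ε)⌉ ≤ (k : ℤ)) :
    1 - ε ≤ genProb G k := by
  rw [← ArithmeticFunction.cardFactors_apply] at hk
  have hlog : 0 ≤ Real.logb 2 (1 / ε) :=
    Real.logb_nonneg one_lt_two (by rw [le_div_iff₀ hε0]; linarith)
  have hceil : 0 ≤ ⌈Real.logb 2 (1 / ε)⌉ := Int.ceil_nonneg hlog
  obtain ⟨d, rfl⟩ := Nat.exists_eq_add_of_le
    (show cardFactors (Nat.card G) ≤ k by omega)
  have hd : 1 / ε ≤ 2 ^ d := by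
    have hle : Real.logb 2 (1 / ε) ≤ (d : ℤ) := Int.ceil_le.1 (by omega)
    rw [Real.logb_le_iff_le_rpow one_lt_two (by positivity)] at hle
    simpa using hle
  have hbad := card_not_generating_mul_two_pow_le G _ (Nat.le_add_right _ d)
  rw [genProb_eq_one_sub]
  generalize cardFactors (Nat.card G) = m at *
  generalize Nat.card {v : Fin (m + d) → G // Subgroup.closure (Set.range v) ≠ ⊤} = b at *
  have hpos : (0 : ℝ) < (Nat.card G : ℝ) ^ (m + d) :=
    pow_pos (Nat.cast_pos.2 Nat.card_pos) _
  have hb : b * 2 ^ d ≤ Nat.card G ^ (m + d) := by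
    refine Nat.le_of_mul_le_mul_left ?_ (pow_pos two_pos m)
    calc 2 ^ m * (b * 2 ^ d) = b * 2 ^ (m + d) := by ring
      _ ≤ _ := hbad
  have hb' : (b : ℝ) * 2 ^ d ≤ (Nat.card G : ℝ) ^ (m + d) := by exact_mod_cast hb
  have hbε : (b : ℝ) / (Nat.card G : ℝ) ^ (m + d) ≤ ε := by
    rw [div_le_iff₀ hpos]
    rw [div_le_iff₀ hε0] at hd
    calc (b : ℝ) ≤ b * (2 ^ d * ε) := le_mul_of_one_le_right (Nat.cast_nonneg b) hd
      _ = ε * (b * 2 ^ d) := by ring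
      _ ≤ _ := by gcongr
  linarith
end

section
/- For every integer n ≥ 1 and every real 0 < ε < 1, the finite nilpotent group G = (ℤ/2ℤ)^n, which has composition length len(G) = n, satisfies φ_k(G) < 1 − ε when k = n + ⌈log₂(1/ε)⌉ − 2 (interpreting φ_k(G) with this value of k, which may be computed in ℤ; if k < 0 or the k-tuples never generate, φ_k(G) = 0). -/
/-- `genProb` extended to integer values of `k`: it is `0` for negative `k`. -/
noncomputable def genProbZ (G : Type*) [Group G] (k : ℤ) : ℝ :=
  if 0 ≤ k then genProb G k.toNat else 0

/-- The coordinate rows of a tuple generating `(ℤ/2ℤ)^n` are linearly independent. -/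
lemma linearIndependent_rows_of_closure_eq_top {n k : ℕ}
    (v : Fin k → Fin n → Multiplicative (ZMod 2)) (hv : Subgroup.closure (Set.range v) = ⊤) :
    LinearIndependent (ZMod 2) (fun i j => (v j i).toAdd) := by
  rw [Fintype.linearIndependent_iff]
  intro g hg i
  let f : (Fin n → Multiplicative (ZMod 2)) →* Multiplicative (ZMod 2) :=
    { toFun := fun x => Multiplicative.ofAdd (∑ i, g i * (x i).toAdd)
      map_one' := by simp
      map_mul' := fun x y => by simp [mul_add, Finset.sum_add_distrib] }
  have hker : Subgroup.closure (Set.range v) ≤ f.ker := by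
    rw [Subgroup.closure_le]
    rintro _ ⟨j, rfl⟩
    have hj := congrFun hg j
    simp only [Finset.sum_apply, Pi.smul_apply, smul_eq_mul, Pi.zero_apply] at hj
    exact congrArg Multiplicative.ofAdd hj
  rw [hv] at hker
  have hi : f (fun l => Multiplicative.ofAdd (if l = i then 1 else 0)) = 1 :=
    hker (Subgroup.mem_top _)
  have hi' := congrArg Multiplicative.toAdd hi
  simpa [f] using hi'

/-- The number of generating `k`-tuples of `(ℤ/2ℤ)^n` is at most the number of linearly
independent `n`-tuples in `(ℤ/2ℤ)^k`. -/
lemma card_generating_le_card_linearIndependent (n k : ℕ) :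
    Nat.card {v : Fin k → Fin n → Multiplicative (ZMod 2) //
        Subgroup.closure (Set.range v) = ⊤} ≤
      Nat.card {s : Fin n → Fin k → ZMod 2 // LinearIndependent (ZMod 2) s} := by
  refine Nat.card_le_card_of_injective
    (fun v => ⟨_, linearIndependent_rows_of_closure_eq_top v.1 v.2⟩) fun v w h => ?_
  ext j i
  exact congrArg Multiplicative.ofAdd (congrFun (congrFun (congrArg Subtype.val h) i) j)

lemma card_linearIndependent_succ_le {d k : ℕ} (hdk : d ≤ k) :
    (Nat.card {s : Fin (d + 1) → Fin k → ZMod 2 // LinearIndependent (ZMod 2) s} : ℝ) ≤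
      (2 ^ k) ^ d * (2 ^ k - 2 ^ d) := by
  rcases hdk.eq_or_lt with rfl | hlt
  · have : IsEmpty {s : Fin (d + 1) → Fin d → ZMod 2 // LinearIndependent (ZMod 2) s} :=
      ⟨fun s => by simpa using s.2.fintype_card_le_finrank⟩
    simp
  · rw [card_linearIndependent (by simpa using hlt), Fin.prod_univ_castSucc]
    have hprod : ∏ i : Fin d, (2 ^ k - 2 ^ (i : ℕ)) ≤ (2 ^ k) ^ d := by
      simpa using Finset.prod_le_pow_card Finset.univ
        (fun i : Fin d => 2 ^ k - 2 ^ (i : ℕ)) (2 ^ k) fun i _ => Nat.sub_le _ _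
    have hle : 2 ^ d ≤ 2 ^ k := Nat.pow_le_pow_right two_pos hdk
    have := Nat.mul_le_mul_right (2 ^ k - 2 ^ d) hprod
    have hcast : ((2 ^ k - 2 ^ d : ℕ) : ℝ) = 2 ^ k - 2 ^ d := by
      rw [Nat.cast_sub hle]
      norm_cast
    rw [← hcast]
    simp only [ZMod.card, Module.finrank_fin_fun, Fin.val_castSucc, Fin.val_last]
    exact_mod_cast this

lemma genProb_zmod_two_succ_le {d k : ℕ} (hdk : d ≤ k) :
    genProb (Fin (d + 1) → Multiplicative (ZMod 2)) k ≤ 1 - 2 ^ d / 2 ^ k := by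
  have hcard : (Nat.card (Fin (d + 1) → Multiplicative (ZMod 2)) : ℝ) ^ k =
      (2 ^ k) ^ d * 2 ^ k := by
    have h2 : Nat.card (Multiplicative (ZMod 2)) = 2 := by simp
    rw [Nat.card_fun, h2, Nat.card_fin]
    push_cast
    ring
  rw [genProb, hcard, div_le_iff₀ (by positivity)]
  calc _ ≤ ((Nat.card {s : Fin (d + 1) → Fin k → ZMod 2 //
          LinearIndependent (ZMod 2) s} : ℕ) : ℝ) :=
        Nat.cast_le.mpr (card_generating_le_card_linearIndependent (d + 1) k)
    _ ≤ (2 ^ k) ^ d * (2 ^ k - 2 ^ d) := card_linearIndependent_succ_le hdk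
    _ = _ := by field_simp

theorem len_bound_tightness (n : ℕ) (hn : 1 ≤ n) (ε : ℝ) (hε0 : 0 < ε) (hε1 : ε < 1) :
    genProbZ (Fin n → Multiplicative (ZMod 2)) ((n : ℤ) + ⌈Real.logb 2 (1 / ε)⌉ - 2) <
      1 - ε := by
  obtain ⟨d, rfl⟩ : ∃ d, n = d + 1 := ⟨n - 1, by omega⟩
  have hpos : 0 < Real.logb 2 (1 / ε) :=
    Real.logb_pos one_lt_two (by rw [lt_div_iff₀ hε0]; linarith)
  obtain ⟨r, hr⟩ : ∃ r : ℕ, ⌈Real.logb 2 (1 / ε)⌉ = r + 1 :=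
    ⟨(⌈Real.logb 2 (1 / ε)⌉ - 1).toNat, by have := Int.ceil_pos.mpr hpos; omega⟩
  have hlog : (r : ℝ) < Real.logb 2 (1 / ε) := by
    have := Int.ceil_lt_add_one (Real.logb 2 (1 / ε))
    rw [hr] at this
    push_cast at this
    linarith
  have hε : ε < 1 / 2 ^ r := by
    rw [Real.lt_logb_iff_rpow_lt one_lt_two (by positivity), Real.rpow_natCast] at hlog
    rwa [lt_one_div hε0 (by positivity)]
  have hk : ((d + 1 : ℕ) : ℤ) + ⌈Real.logb 2 (1 / ε)⌉ - 2 = (d + r : ℕ) := by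
    rw [hr]
    push_cast
    ring
  rw [hk, genProbZ, if_pos (Int.natCast_nonneg _), Int.toNat_natCast]
  have hgen := genProb_zmod_two_succ_le (Nat.le_add_right d r)
  have hdiv : (2 : ℝ) ^ d / 2 ^ (d + r) = 1 / 2 ^ r := by
    rw [pow_add]
    field_simp
  linarith
end

section
/- Let G be a finite nilpotent group and let k be a natural number. For each prime p dividing |G| let G_p denote the (unique, normal) Sylow p-subgroup of G. Then φ_k(G) = ∏_{p | |G|} φ_k(G_p), the product ranging over the distinct prime divisors of |G|. -/
/-- A subgroup of a finite product of finite groups of pairwise coprime orders that projects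
onto every factor is the whole product. -/
theorem Subgroup.eq_top_of_map_evalMonoidHom_eq_top {ι : Type*} [Fintype ι] {M : ι → Type*}
    [∀ i, Group (M i)] [∀ i, Finite (M i)]
    (hM : Pairwise fun i j => (Nat.card (M i)).Coprime (Nat.card (M j)))
    (H : Subgroup (∀ i, M i)) (hH : ∀ i, H.map (Pi.evalMonoidHom M i) = ⊤) : H = ⊤ := by
  apply Subgroup.eq_top_of_le_card
  rw [Nat.card_pi]
  refine Nat.le_of_dvd Nat.card_pos (Finset.prod_dvd_of_isRelPrime ?_ fun i _ => ?_)
  · intro i _ j _ hij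
    exact Nat.coprime_iff_isRelPrime.mp (hM hij)
  · have h := H.card_map_dvd (Pi.evalMonoidHom M i)
    rwa [hH i, Subgroup.card_top] at h

/-- A family generates a finite product of finite groups of pairwise coprime orders if and only if
each of its coordinate families generates the corresponding factor. -/
theorem Subgroup.closure_range_pi_eq_top_iff {ι κ : Type*} [Fintype ι] {M : ι → Type*}
    [∀ i, Group (M i)] [∀ i, Finite (M i)]
    (hM : Pairwise fun i j => (Nat.card (M i)).Coprime (Nat.card (M j)))
    (v : κ → ∀ i, M i) :
    Subgroup.closure (Set.range v) = ⊤ ↔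
      ∀ i, Subgroup.closure (Set.range fun a => v a i) = ⊤ := by
  have hmap (i : ι) : (Subgroup.closure (Set.range v)).map (Pi.evalMonoidHom M i) =
      Subgroup.closure (Set.range fun a => v a i) := by
    rw [MonoidHom.map_closure, ← Set.range_comp]
    rfl
  constructor
  · intro h i
    rw [← hmap, h, Subgroup.map_top_of_surjective _ (Function.surjective_eval i)]
  · intro h
    exact Subgroup.eq_top_of_map_evalMonoidHom_eq_top hM _ fun i => (hmap i).trans (h i)

theorem genProb_congr {G H : Type*} [Group G] [Group H] (e : G ≃* H) (k : ℕ) :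
    genProb G k = genProb H k := by
  unfold genProb
  rw [Nat.card_congr e.toEquiv]
  congr 2
  refine Nat.card_congr ((Equiv.arrowCongr (Equiv.refl _) e.toEquiv).subtypeEquiv fun v => ?_)
  have hmap : Subgroup.closure (Set.range (e ∘ v)) =
      (Subgroup.closure (Set.range v)).map e.toMonoidHom := by
    rw [MonoidHom.map_closure, ← Set.range_comp]
    rfl
  change _ ↔ Subgroup.closure (Set.range (e ∘ v)) = ⊤
  rw [hmap, ← Subgroup.map_top_of_surjective e.toMonoidHom e.surjective]
  exact (Subgroup.map_injective e.injective).eq_iff.symm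

theorem genProb_pi_of_coprime {ι : Type*} [Fintype ι] {M : ι → Type*}
    [∀ i, Group (M i)] [∀ i, Finite (M i)]
    (hM : Pairwise fun i j => (Nat.card (M i)).Coprime (Nat.card (M j))) (k : ℕ) :
    genProb (∀ i, M i) k = ∏ i, genProb (M i) k := by
  have hcard : Nat.card {v : Fin k → ∀ i, M i // Subgroup.closure (Set.range v) = ⊤} =
      ∏ i, Nat.card {w : Fin k → M i // Subgroup.closure (Set.range w) = ⊤} := by
    rw [← Nat.card_pi]
    refine Nat.card_congr (((Equiv.piComm fun _ i => M i).subtypeEquiv fun v => ?_).trans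
      (Equiv.subtypePiEquivPi
        (p := fun i (w : Fin k → M i) => Subgroup.closure (Set.range w) = ⊤)))
    exact Subgroup.closure_range_pi_eq_top_iff hM v
  simp only [genProb, hcard, Nat.card_pi, Nat.cast_prod, Finset.prod_div_distrib,
    Finset.prod_pow]

/-- A finite nilpotent group is the direct product of any choice of its Sylow subgroups. -/
theorem Group.IsNilpotent.nonempty_mulEquiv_pi_sylow (G : Type*) [Group G] [Finite G]
    [Group.IsNilpotent G] (P : ∀ p : ℕ, Sylow p G) :
    Nonempty (G ≃* ∀ p : (Nat.card G).primeFactors, (P p : Subgroup G)) := by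
  obtain ⟨e⟩ := (Group.isNilpotent_of_finite_tfae (G := G).out 0 4 rfl rfl).mp ‹_›
  refine ⟨e.symm.trans (MulEquiv.piCongrRight fun p => ?_)⟩
  have : Fact (p : ℕ).Prime := ⟨Nat.prime_of_mem_primeFactors p.2⟩
  letI : Unique (Sylow p G) :=
    { default := P p
      uniq := fun Q => (Sylow.unique_of_normal (P p) inferInstance).instSubsingleton.elim Q _ }
  exact MulEquiv.piUnique fun Q : Sylow p G => (Q : Subgroup G)

theorem genProb_nilpotent_prod_sylow (G : Type*) [Group G] [Finite G] [Group.IsNilpotent G]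
    (k : ℕ) (P : ∀ p : ℕ, Sylow p G) :
    genProb G k =
      ∏ p ∈ (Nat.card G).primeFactors, genProb ↥((P p : Subgroup G)) k := by
  obtain ⟨e⟩ := Group.IsNilpotent.nonempty_mulEquiv_pi_sylow G P
  rw [genProb_congr e, genProb_pi_of_coprime, Finset.prod_coe_sort (Nat.card G).primeFactors
    fun p => genProb (P p : Subgroup G) k]
  intro p q hpq
  have : Fact (p : ℕ).Prime := ⟨Nat.prime_of_mem_primeFactors p.2⟩
  have : Fact (q : ℕ).Prime := ⟨Nat.prime_of_mem_primeFactors q.2⟩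
  exact IsPGroup.coprime_card_of_ne p q (Subtype.coe_injective.ne hpq) _ _
    (P p).isPGroup' (P q).isPGroup'
end

section
/- Let G be a finite abelian group, let H ≤ G be a subgroup, and let 0 < ε < 1 be real. If k is a natural number with k ≥ rank(G) + ⌈log₂(2/ε)⌉, then φ_k(G/H) ≥ 1 − ε. -/
/-- In a finite commutative group every proper subgroup is annihilated by a surjective
homomorphism onto a cyclic group of prime order. -/
theorem exists_surjective_zmod_of_ne_top {A : Type*} [CommGroup A] [Finite A] {S : Subgroup A}
    (hS : S ≠ ⊤) :
    ∃ p ∈ (Nat.card A).primeFactors, ∃ χ : A →* Multiplicative (ZMod p),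
      Function.Surjective χ ∧ S ≤ χ.ker := by
  obtain ⟨M, hM, hSM⟩ := (eq_top_or_exists_le_coatom S).resolve_left hS
  have : Nontrivial (A ⧸ M) := QuotientGroup.nontrivial_iff.2 hM.1
  have hsimple : IsSimpleGroup (A ⧸ M) := by
    refine ⟨fun K _ => ?_⟩
    have hinj := Subgroup.comap_injective (QuotientGroup.mk'_surjective M)
    have hle : M ≤ K.comap (QuotientGroup.mk' M) := by
      simpa using (QuotientGroup.mk' M).ker_le_comap K
    rcases hM.le_iff.1 hle with h | h
    · exact Or.inr (hinj (by simpa using h))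
    · refine Or.inl (hinj ?_)
      rw [h, MonoidHom.comap_bot, QuotientGroup.ker_mk']
  have hcyc : IsCyclic (A ⧸ M) := inferInstance
  let e := (zmodCyclicMulEquiv hcyc).symm
  refine ⟨Nat.card (A ⧸ M), ?_, e.toMonoidHom.comp (QuotientGroup.mk' M), ?_, ?_⟩
  · exact Nat.mem_primeFactors.2
      ⟨IsSimpleGroup.prime_card, M.card_quotient_dvd_card, Nat.card_pos.ne'⟩
  · exact e.surjective.comp (QuotientGroup.mk'_surjective M)
  · intro x hx
    simpa using hSM hx

/-- A group homomorphism is determined by its values on a minimal generating set. -/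
theorem card_monoidHom_le_pow_rank (A C : Type*) [Group A] [Group.FG A] [Group C] [Finite C] :
    Finite (A →* C) ∧ Nat.card (A →* C) ≤ Nat.card C ^ Group.rank A := by
  obtain ⟨S, hcard, hS⟩ := Group.rank_spec A
  have hinj : Function.Injective (fun (f : A →* C) (s : S) => f s) := fun f g h =>
    MonoidHom.eq_of_eqOn_dense hS fun x hx => congrFun h ⟨x, hx⟩
  refine ⟨Finite.of_injective _ hinj, (Nat.card_le_card_of_injective _ hinj).trans ?_⟩
  simp [Nat.card_fun, hcard]

/-- The number of `k`-tuples annihilated by some surjection onto the cyclic group of order `p`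
is at most `p ^ (rank A) * (|A| / p) ^ k`. -/
theorem card_annihilated_tuples_le (A : Type*) [CommGroup A] [Finite A] (k p : ℕ)
    (hp : p.Prime) :
    Nat.card {v : Fin k → A // ∃ χ : A →* Multiplicative (ZMod p),
      Function.Surjective χ ∧ ∀ i, v i ∈ χ.ker} ≤
      p ^ Group.rank A * (Nat.card A / p) ^ k := by
  have : NeZero p := ⟨hp.ne_zero⟩
  obtain ⟨hfin, hle⟩ := card_monoidHom_le_pow_rank A (Multiplicative (ZMod p))
  let X := {χ : A →* Multiplicative (ZMod p) // Function.Surjective χ}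
  have hX : Nat.card X ≤ p ^ Group.rank A := by
    refine (Finite.card_subtype_le _).trans (hle.trans_eq ?_)
    simp
  have hker (χ : X) : Nat.card χ.1.ker = Nat.card A / p := by
    have h := χ.1.ker.card_mul_index
    rw [Subgroup.index_ker, MonoidHom.range_eq_top.2 χ.2] at h
    have hc : Nat.card (⊤ : Subgroup (Multiplicative (ZMod p))) = p := by simp
    rw [hc] at h
    rw [← h, Nat.mul_div_cancel _ hp.pos]
  let f (y : Σ χ : X, (Fin k → χ.1.ker)) :
      {v : Fin k → A // ∃ χ : A →* Multiplicative (ZMod p),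
        Function.Surjective χ ∧ ∀ i, v i ∈ χ.ker} :=
    ⟨fun i => y.2 i, y.1.1, y.1.2, fun i => (y.2 i).2⟩
  have hf : Function.Surjective f := by
    rintro ⟨v, χ, hχ, hv⟩
    exact ⟨⟨⟨χ, hχ⟩, fun i => ⟨v i, hv i⟩⟩, rfl⟩
  refine (Nat.card_le_card_of_surjective f hf).trans ?_
  have : Fintype X := Fintype.ofFinite X
  rw [Nat.card_sigma]
  simp only [Nat.card_fun, hker, Nat.card_fin, Finset.sum_const, smul_eq_mul, Finset.card_univ]
  rw [← Nat.card_eq_fintype_card]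
  exact Nat.mul_le_mul_right _ hX

/-- Union bound for the number of non-generating tuples. -/
theorem card_nongenerating_tuples_le (A : Type*) [CommGroup A] [Finite A] (k : ℕ) :
    Nat.card {v : Fin k → A // Subgroup.closure (Set.range v) ≠ ⊤} ≤
      ∑ p ∈ (Nat.card A).primeFactors, p ^ Group.rank A * (Nat.card A / p) ^ k := by
  classical
  have : Fintype (Fin k → A) := Fintype.ofFinite _
  let B (p : ℕ) : Finset (Fin k → A) := {v | ∃ χ : A →* Multiplicative (ZMod p),
    Function.Surjective χ ∧ ∀ i, v i ∈ χ.ker}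
  have hsub : ({v | Subgroup.closure (Set.range v) ≠ ⊤} : Finset (Fin k → A)) ⊆
      (Nat.card A).primeFactors.biUnion B := by
    intro v hv
    obtain ⟨p, hp, χ, hχ, hle⟩ := exists_surjective_zmod_of_ne_top (Finset.mem_filter.1 hv).2
    refine Finset.mem_biUnion.2 ⟨p, hp, Finset.mem_filter.2 ⟨Finset.mem_univ _, χ, hχ, ?_⟩⟩
    exact fun i => hle (Subgroup.subset_closure ⟨i, rfl⟩)
  rw [Nat.card_eq_fintype_card, Fintype.card_subtype]
  refine (Finset.card_le_card hsub).trans (Finset.card_biUnion_le.trans ?_)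
  refine Finset.sum_le_sum fun p hp => ?_
  have h := card_annihilated_tuples_le A k p (Nat.prime_of_mem_primeFactors hp)
  rwa [Nat.card_eq_fintype_card, Fintype.card_subtype] at h

theorem sum_range_two_div_odd_pow_le (d N : ℕ) (hd : 2 ≤ d) :
    ∑ m ∈ Finset.range N, (2 / (2 * (m : ℝ) + 3)) ^ d ≤ 1 - 1 / ((N : ℝ) + 1) := by
  induction N with
  | zero => simp
  | succ N ih =>
    have hle : (2 / (2 * (N : ℝ) + 3)) ^ d ≤ (2 / (2 * (N : ℝ) + 3)) ^ 2 := by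
      refine pow_le_pow_of_le_one (by positivity) ?_ hd
      rw [div_le_one (by positivity)]
      linarith [(Nat.cast_nonneg N : (0 : ℝ) ≤ N)]
    have hsq : (2 / (2 * (N : ℝ) + 3)) ^ 2 ≤ 1 / ((N : ℝ) + 1) - 1 / ((N : ℝ) + 1 + 1) := by
      rw [div_sub_div _ _ (by positivity) (by positivity), div_pow,
        div_le_div_iff₀ (by positivity) (by positivity)]
      nlinarith
    rw [Finset.sum_range_succ]
    push_cast
    linarith

/-- A finite sum of `p ^ (-d)` over primes is at most twice the contribution of `p = 2`. -/
theorem sum_primes_inv_pow_le (P : Finset ℕ) (hP : ∀ p ∈ P, p.Prime) (d : ℕ) (hd : 2 ≤ d) :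
    ∑ p ∈ P, ((p : ℝ)⁻¹) ^ d ≤ 2 * (2⁻¹ : ℝ) ^ d := by
  classical
  let N := P.sup id
  let O := (Finset.range N).image fun m => 2 * m + 3
  have hsub : P ⊆ insert 2 O := by
    intro p hp
    rcases (hP p hp).eq_two_or_odd' with h | ⟨m, hm⟩
    · simp [h]
    · have h2 := (hP p hp).two_le
      have hN : p ≤ N := Finset.le_sup (f := id) hp
      refine Finset.mem_insert_of_mem (Finset.mem_image.2 ⟨m - 1, ?_, by omega⟩)
      exact Finset.mem_range.2 (by omega)
  have hodd : ∑ p ∈ O, ((p : ℝ)⁻¹) ^ d ≤ (2⁻¹ : ℝ) ^ d := by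
    rw [Finset.sum_image (fun a _ b _ h => by simpa using h)]
    have h := sum_range_two_div_odd_pow_le d N hd
    have h1 : ∑ m ∈ Finset.range N, (2 / (2 * (m : ℝ) + 3)) ^ d ≤ 1 :=
      h.trans (by linarith [(by positivity : (0 : ℝ) ≤ 1 / ((N : ℝ) + 1))])
    have heq : ∑ m ∈ Finset.range N, (((2 * m + 3 : ℕ) : ℝ)⁻¹) ^ d =
        (2⁻¹ : ℝ) ^ d * ∑ m ∈ Finset.range N, (2 / (2 * (m : ℝ) + 3)) ^ d := by
      rw [Finset.mul_sum]
      refine Finset.sum_congr rfl fun m _ => ?_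
      rw [← mul_pow]
      push_cast
      congr 1
      field_simp
    rw [heq]
    exact mul_le_of_le_one_right (by positivity) h1
  have h2 : 2 ∉ O := by
    simp only [O, Finset.mem_image, not_exists, not_and]
    intros
    omega
  refine (Finset.sum_le_sum_of_subset_of_nonneg hsub fun _ _ _ => by positivity).trans ?_
  rw [Finset.sum_insert h2]
  push_cast
  linarith

theorem genProb_add_card_nongenerating_div (A : Type*) [Group A] [Finite A] (k : ℕ) :
    genProb A k + (Nat.card {v : Fin k → A // Subgroup.closure (Set.range v) ≠ ⊤} : ℝ) /
      (Nat.card A : ℝ) ^ k = 1 := by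
  classical
  have : Fintype (Fin k → A) := Fintype.ofFinite _
  have hA : (Nat.card A : ℝ) ≠ 0 := Nat.cast_ne_zero.2 Nat.card_pos.ne'
  have h : Nat.card {v : Fin k → A // Subgroup.closure (Set.range v) = ⊤} +
      Nat.card {v : Fin k → A // Subgroup.closure (Set.range v) ≠ ⊤} = Nat.card A ^ k := by
    rw [← Nat.card_sum, Nat.card_congr (Equiv.sumCompl _), Nat.card_fun, Nat.card_fin]
  rw [genProb, ← add_div, div_eq_one_iff_eq (pow_ne_zero _ hA)]
  exact_mod_cast h

theorem one_sub_le_genProb (A : Type*) [CommGroup A] [Finite A] (k d : ℕ) (hd : 2 ≤ d)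
    (hk : Group.rank A + d ≤ k) : 1 - 2 * (2⁻¹ : ℝ) ^ d ≤ genProb A k := by
  have hA : (0 : ℝ) < Nat.card A := Nat.cast_pos.2 Nat.card_pos
  have hcard : (Nat.card {v : Fin k → A // Subgroup.closure (Set.range v) ≠ ⊤} : ℝ) ≤
      ∑ p ∈ (Nat.card A).primeFactors, (p : ℝ) ^ Group.rank A * (Nat.card A / p) ^ k := by
    refine (Nat.cast_le.2 (card_nongenerating_tuples_le A k)).trans ?_
    push_cast
    refine Finset.sum_le_sum fun p _ => ?_
    gcongr
    exact Nat.cast_div_le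
  have hbad : (Nat.card {v : Fin k → A // Subgroup.closure (Set.range v) ≠ ⊤} : ℝ) /
      (Nat.card A : ℝ) ^ k ≤ ∑ p ∈ (Nat.card A).primeFactors, ((p : ℝ)⁻¹) ^ d := by
    rw [div_le_iff₀ (by positivity), Finset.sum_mul]
    refine hcard.trans (Finset.sum_le_sum fun p hp => ?_)
    have hp1 : (1 : ℝ) ≤ p := by exact_mod_cast (Nat.prime_of_mem_primeFactors hp).one_le
    rw [div_eq_mul_inv, mul_pow, mul_left_comm, mul_comm ((p : ℝ)⁻¹ ^ d)]
    refine mul_le_mul_of_nonneg_left ?_ (by positivity)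
    calc (p : ℝ) ^ Group.rank A * (p : ℝ)⁻¹ ^ k
        ≤ (p : ℝ) ^ Group.rank A * (p : ℝ)⁻¹ ^ (Group.rank A + d) := by
          gcongr 1
          exact pow_le_pow_of_le_one (by positivity) (inv_le_one_of_one_le₀ hp1) hk
      _ = (p : ℝ)⁻¹ ^ d := by
          rw [pow_add, ← mul_assoc, ← mul_pow, mul_inv_cancel₀ (by positivity), one_pow, one_mul]
  have hsum := sum_primes_inv_pow_le (Nat.card A).primeFactors
    (fun p hp => Nat.prime_of_mem_primeFactors hp) d hd
  linarith [genProb_add_card_nongenerating_div A k]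

theorem ahsp_rank_bound (G : Type*) [CommGroup G] [Finite G] (H : Subgroup G)
    (ε : ℝ) (hε0 : 0 < ε) (hε1 : ε < 1) (k : ℕ)
    (hk : (Group.rank G : ℤ) + ⌈Real.logb 2 (2 / ε)⌉ ≤ (k : ℤ)) :
    1 - ε ≤ genProb (G ⧸ H) k := by
  have hlog : 1 < Real.logb 2 (2 / ε) := by
    rw [Real.lt_logb_iff_rpow_lt (by norm_num) (by positivity), Real.rpow_one,
      lt_div_iff₀ hε0]
    linarith
  have hceil : 2 ≤ ⌈Real.logb 2 (2 / ε)⌉ := by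
    have : 1 < ⌈Real.logb 2 (2 / ε)⌉ := Int.lt_ceil.2 (by exact_mod_cast hlog)
    omega
  obtain ⟨d, hd⟩ := Int.eq_ofNat_of_zero_le (by omega : 0 ≤ ⌈Real.logb 2 (2 / ε)⌉)
  have hrank : Group.rank (G ⧸ H) ≤ Group.rank G :=
    Group.rank_le_of_surjective _ (QuotientGroup.mk'_surjective H)
  have hbound := one_sub_le_genProb (G ⧸ H) k d (by omega) (by omega)
  have hpow : 2 / ε ≤ (2 : ℝ) ^ d := by
    have h : Real.logb 2 (2 / ε) ≤ (d : ℝ) := by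
      have := Int.le_ceil (Real.logb 2 (2 / ε))
      rw [hd] at this
      exact_mod_cast this
    rw [Real.logb_le_iff_le_rpow (by norm_num) (by positivity)] at h
    exact_mod_cast h
  have hε : 2 * (2⁻¹ : ℝ) ^ d ≤ ε := by
    rw [div_le_iff₀ hε0] at hpow
    rw [inv_pow, ← div_eq_mul_inv, div_le_iff₀ (by positivity)]
    linarith
  linarith
end

section
/- Let G be a finite nilpotent group with rank(G) = r, and let k be a natural number with k ≥ r. Then φ_k(G) ≥ ∏_{p | |G|} ∏_{j=0}^{r−1} (1 − p^{j−k}), the outer product ranging over the distinct prime divisors p of |G|. -/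
/-- A normal maximal subgroup of a finite group is annihilated by a nonzero homomorphism to
`ZMod p` for some prime divisor `p` of the order. -/
theorem Subgroup.exists_prime_hom_of_isCoatom {G : Type*} [Group G] [Finite G] {M : Subgroup G}
    (hM : IsCoatom M) [M.Normal] :
    ∃ p ∈ (Nat.card G).primeFactors, ∃ f : Additive G →+ ZMod p,
      f ≠ 0 ∧ ∀ g ∈ M, f (Additive.ofMul g) = 0 := by
  have triv (K : Subgroup (G ⧸ M)) : K = ⊥ ∨ K = ⊤ := by
    have hle : M ≤ K.comap (QuotientGroup.mk' M) := by
      simpa using Subgroup.ker_le_comap (QuotientGroup.mk' M) K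
    have hs := QuotientGroup.mk'_surjective M
    rcases hM.le_iff.1 hle with h | h
    · right
      rwa [← Subgroup.comap_top (QuotientGroup.mk' M),
        (Subgroup.comap_injective hs).eq_iff] at h
    · left
      apply Subgroup.comap_injective hs
      rw [h, MonoidHom.comap_bot, QuotientGroup.ker_mk']
  have hnt : Nontrivial (G ⧸ M) := QuotientGroup.nontrivial_iff.2 hM.1
  obtain ⟨x, hx⟩ := exists_ne (1 : G ⧸ M)
  have hcyc : IsCyclic (G ⧸ M) := by
    refine ⟨x, fun y => ?_⟩
    change y ∈ Subgroup.zpowers x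
    rw [(triv (Subgroup.zpowers x)).resolve_left (by simpa using hx)]
    trivial
  let : CommGroup (G ⧸ M) := hcyc.commGroup
  have : IsSimpleGroup (G ⧸ M) := ⟨fun K _ => triv K⟩
  have hp : (Nat.card (G ⧸ M)).Prime := IsSimpleGroup.prime_card
  let e := (zmodCyclicMulEquiv hcyc).symm
  refine ⟨Nat.card (G ⧸ M), ?_, ?_⟩
  · exact Nat.mem_primeFactors.2 ⟨hp, M.card_quotient_dvd_card, Nat.card_pos.ne'⟩
  · refine ⟨MonoidHom.toAdditiveLeft (e.toMonoidHom.comp (QuotientGroup.mk' M)), ?_, ?_⟩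
    · intro h
      obtain ⟨g, rfl⟩ := QuotientGroup.mk'_surjective M x
      have h1 : e (QuotientGroup.mk' M g) = 1 := DFunLike.congr_fun h (Additive.ofMul g)
      exact hx (by simpa using h1)
    · intro g hg
      change e (QuotientGroup.mk' M g) = 1
      rw [show QuotientGroup.mk' M g = 1 from (QuotientGroup.eq_one_iff g).2 hg, map_one]

theorem exists_prime_hom_of_closure_ne_top {G : Type*} [Group G] [Finite G] [Group.IsNilpotent G]
    {s : Set G} (hs : Subgroup.closure s ≠ ⊤) :
    ∃ p ∈ (Nat.card G).primeFactors, ∃ f : Additive G →+ ZMod p,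
      f ≠ 0 ∧ ∀ g ∈ s, f (Additive.ofMul g) = 0 := by
  obtain ⟨M, hM, hle⟩ := (eq_top_or_exists_le_coatom (Subgroup.closure s)).resolve_left hs
  have : M.Normal :=
    Subgroup.NormalizerCondition.normal_of_coatom M Group.normalizerCondition_of_isNilpotent hM
  obtain ⟨p, hp, f, hf, h⟩ := Subgroup.exists_prime_hom_of_isCoatom hM
  exact ⟨p, hp, f, hf, fun g hg => h g (hle (Subgroup.subset_closure hg))⟩

theorem finrank_addHom_zmod_le_rank (G : Type*) [Group G] [Finite G] (p : ℕ) [Fact p.Prime] :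
    Module.finrank (ZMod p) (Additive G →+ ZMod p) ≤ Group.rank G := by
  obtain ⟨S, hcard, hS⟩ := Group.rank_spec G
  let ev : (Additive G →+ ZMod p) →ₗ[ZMod p] (S → ZMod p) :=
    { toFun := fun f g => f (Additive.ofMul g.1)
      map_add' := fun _ _ => rfl
      map_smul' := fun _ _ => rfl }
  have hinj : Function.Injective ev := by
    intro f g hfg
    have := MonoidHom.eq_of_eqOn_dense (f := AddMonoidHom.toMultiplicativeRight f)
      (g := AddMonoidHom.toMultiplicativeRight g) hS (fun x hx => congrFun hfg ⟨x, hx⟩)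
    exact AddMonoidHom.toMultiplicativeRight.injective this
  simpa [hcard] using LinearMap.finrank_le_finrank_of_injective hinj

/-- Linearly independent homomorphisms to `ZMod p` are jointly surjective. -/
theorem surjective_of_linearIndependent_addHom_zmod {A : Type*} [AddGroup A] {p : ℕ}
    [Fact p.Prime] {ι : Type*} [Finite ι] {f : ι → A →+ ZMod p}
    (hf : LinearIndependent (ZMod p) f) : Function.Surjective fun a i => f i a := by
  have := Fintype.ofFinite ι
  let W : Submodule (ZMod p) (ι → ZMod p) :=
    AddSubgroup.toZModSubmodule p (AddMonoidHom.range (AddMonoidHom.pi f))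
  have hW : W = ⊤ := by
    classical
    by_contra hne
    obtain ⟨φ, hφ, hle⟩ := W.exists_le_ker_of_lt_top (lt_top_iff_ne_top.2 hne)
    apply hφ
    have hsum : ∑ i, φ (Pi.single i 1) • f i = 0 := by
      ext a
      have h0 : φ (fun i => f i a) = 0 := hle (show _ ∈ AddMonoidHom.range _ from ⟨a, rfl⟩)
      rw [LinearMap.pi_apply_eq_sum_univ] at h0
      have hsingle (i : ι) : (Pi.single i 1 : ι → ZMod p) = fun j => if i = j then 1 else 0 := by
        ext j
        simp [Pi.single_apply, eq_comm]
      simpa [mul_comm, AddMonoidHom.finsetSum_apply, hsingle] using h0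
    have hc := Fintype.linearIndependent_iff.1 hf _ hsum
    ext i
    simpa using hc i
  intro y
  have hy : y ∈ W := hW ▸ Submodule.mem_top
  obtain ⟨a, ha⟩ := hy
  exact ⟨a, ha⟩

/-- A homomorphism to a product of finite groups of pairwise coprime orders is surjective as soon as
its components are. -/
theorem AddMonoidHom.pi_surjective_of_coprime {A ι : Type*} [AddGroup A] [Finite ι]
    {B : ι → Type*} [∀ i, AddGroup (B i)] [∀ i, Finite (B i)] (f : ∀ i, A →+ B i)
    (hf : ∀ i, Function.Surjective (f i))
    (hc : Pairwise fun i j => (Nat.card (B i)).Coprime (Nat.card (B j))) :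
    Function.Surjective fun a i => f i a := by
  have := Fintype.ofFinite ι
  have hdvd : Nat.card (∀ i, B i) ∣ Nat.card (AddMonoidHom.range (AddMonoidHom.pi f)) := by
    rw [Nat.card_pi]
    refine Fintype.prod_dvd_of_isRelPrime
      (fun i j hij => Nat.coprime_iff_isRelPrime.1 (hc hij)) fun i => ?_
    refine AddSubgroup.card_dvd_of_surjective
      ((Pi.evalAddMonoidHom B i).comp (AddMonoidHom.range (AddMonoidHom.pi f)).subtype) fun y => ?_
    obtain ⟨a, rfl⟩ := hf i y
    exact ⟨⟨_, a, rfl⟩, rfl⟩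
  have htop : AddMonoidHom.range (AddMonoidHom.pi f) = ⊤ :=
    AddSubgroup.eq_top_of_le_card _ (Nat.le_of_dvd Nat.card_pos hdvd)
  exact AddMonoidHom.range_eq_top.1 htop

theorem AddMonoidHom.card_preimage_mul_card {A B : Type*} [AddGroup A] [AddGroup B] [Finite A]
    (f : A →+ B) (hf : Function.Surjective f) (S : Set B) :
    Nat.card (f ⁻¹' S) * Nat.card B = Nat.card S * Nat.card A := by
  have hB : Finite B := Finite.of_surjective f hf
  have key (T : Set B) : Nat.card (f ⁻¹' T) = Nat.card T * Nat.card f.ker := by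
    rw [← Nat.card_prod]
    refine Nat.card_congr (Equiv.trans ?_ (Equiv.sigmaEquivProd T f.ker))
    exact (Equiv.sigmaFiberEquiv (fun a : f ⁻¹' T => (⟨f a, a.2⟩ : T))).symm.trans
      (Equiv.sigmaCongrRight fun t => by
        refine Equiv.trans ?_ (f.fiberEquivKerOfSurjective hf t)
        exact
          { toFun := fun x => ⟨x.1.1, congrArg Subtype.val x.2⟩
            invFun := fun a => ⟨⟨a.1, by
              rw [Set.mem_preimage, show f a.1 = t from a.2]; exact t.2⟩, Subtype.ext a.2⟩
            left_inv := fun _ => rfl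
            right_inv := fun _ => rfl })
  have hA := key Set.univ
  rw [Set.preimage_univ, Nat.card_univ, Nat.card_univ] at hA
  rw [key, hA]
  ring

theorem prod_range_one_sub_zpow_le_card_linearIndependent_div {p d r k : ℕ} [Fact p.Prime]
    (hdr : d ≤ r) (hrk : r ≤ k) :
    ∏ j ∈ Finset.range r, (1 - (p : ℝ) ^ ((j : ℤ) - (k : ℤ))) ≤
      Nat.card {m : Fin d → Fin k → ZMod p // LinearIndependent (ZMod p) m} /
        Nat.card (Fin d → Fin k → ZMod p) := by
  have hp : (1 : ℝ) ≤ p := by exact_mod_cast (Fact.out : p.Prime).one_le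
  have hp0 : (p : ℝ) ≠ 0 := by positivity
  have hnn (j : ℕ) (hj : j < r) : 0 ≤ 1 - (p : ℝ) ^ ((j : ℤ) - (k : ℤ)) :=
    sub_nonneg.2 (zpow_le_one_of_nonpos₀ hp (by omega))
  have hone (j : ℕ) : 1 - (p : ℝ) ^ ((j : ℤ) - (k : ℤ)) ≤ 1 := sub_le_self _ (by positivity)
  have heq : (Nat.card {m : Fin d → Fin k → ZMod p // LinearIndependent (ZMod p) m} : ℝ) /
      Nat.card (Fin d → Fin k → ZMod p) =
      ∏ j ∈ Finset.range d, (1 - (p : ℝ) ^ ((j : ℤ) - (k : ℤ))) := by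
    rw [card_linearIndependent (by simpa using hdr.trans hrk)]
    simp only [Module.finrank_fin_fun, ZMod.card, Nat.card_pi, Nat.card_zmod, Finset.prod_const,
      Finset.card_univ, Fintype.card_fin]
    rw [Fin.prod_univ_eq_prod_range (fun i => p ^ k - p ^ i), Nat.cast_prod, Nat.cast_pow,
      ← Finset.card_range d, ← Finset.prod_const, Finset.card_range, ← Finset.prod_div_distrib]
    refine Finset.prod_congr rfl fun j hj => ?_
    have hj' : j ≤ k := by have := Finset.mem_range.1 hj; omega
    rw [Nat.cast_sub (Nat.pow_le_pow_right (Fact.out : p.Prime).pos hj'), zpow_sub₀ hp0]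
    push_cast
    simp only [zpow_natCast]
    field_simp
  rw [heq, ← Nat.add_sub_cancel' hdr, Finset.prod_range_add]
  refine mul_le_of_le_one_right (Finset.prod_nonneg fun j hj => hnn j ?_)
    (Finset.prod_le_one (fun j hj => hnn _ ?_) fun j _ => hone _)
  · have := Finset.mem_range.1 hj; omega
  · have := Finset.mem_range.1 hj; omega

theorem genProb_nilpotent_prod_lower_bound (G : Type*) [Group G] [Finite G]
    [Group.IsNilpotent G] (r : ℕ) (hr : Group.rank G = r) (k : ℕ) (hk : r ≤ k) :
    (∏ p ∈ (Nat.card G).primeFactors, ∏ j ∈ Finset.range r,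
        (1 - (p : ℝ) ^ ((j : ℤ) - (k : ℤ)))) ≤ genProb G k := by
  subst hr
  have hprime (p : (Nat.card G).primeFactors) : Fact (p : ℕ).Prime :=
    ⟨Nat.prime_of_mem_primeFactors p.2⟩
  let d (p : (Nat.card G).primeFactors) : ℕ :=
    Module.finrank (ZMod p) (Additive G →+ ZMod p)
  have hfin (p : (Nat.card G).primeFactors) : Finite (Additive G →+ ZMod p) :=
    Finite.of_injective (fun f : Additive G →+ ZMod p => (f : Additive G → ZMod p))
      DFunLike.coe_injective
  let b (p : (Nat.card G).primeFactors) :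
      Module.Basis (Fin (d p)) (ZMod p) (Additive G →+ ZMod p) :=
    Module.finBasis _ _
  let Φ : (Fin k → Additive G) →+
      ((p : (Nat.card G).primeFactors) → Fin (d p) → Fin k → ZMod p) :=
    { toFun := fun v p i j => b p i (v j)
      map_zero' := by ext; simp
      map_add' := fun _ _ => by ext; simp }
  have hΦ : Function.Surjective Φ := by
    have h := AddMonoidHom.pi_surjective_of_coprime
      (fun p => AddMonoidHom.pi (fun i => b p i))
      (fun p => surjective_of_linearIndependent_addHom_zmod (b p).linearIndependent) (by
        intro p q hpq
        simp only [Nat.card_pi, Nat.card_zmod, Finset.prod_const]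
        exact Nat.Coprime.pow _ _ ((Nat.coprime_primes (hprime p).out (hprime q).out).2
          (Subtype.coe_ne_coe.2 hpq)))
    intro m
    choose v hv using fun j : Fin k => h fun p i => m p i j
    refine ⟨v, ?_⟩
    funext p i j
    exact congrFun (congrFun (hv j) p) i
  let S : Set ((p : (Nat.card G).primeFactors) → Fin (d p) → Fin k → ZMod p) :=
    {m | ∀ p : (Nat.card G).primeFactors, LinearIndependent (ZMod p) (m p)}
  have hgen (v : Fin k → G) (hv : Φ (fun j => Additive.ofMul (v j)) ∈ S) :
      Subgroup.closure (Set.range v) = ⊤ := by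
    by_contra hne
    obtain ⟨p, hp, f, hf, h0⟩ := exists_prime_hom_of_closure_ne_top hne
    apply hf
    have hsum := (b ⟨p, hp⟩).sum_repr f
    have hc := Fintype.linearIndependent_iff.1 (hv ⟨p, hp⟩) ((b ⟨p, hp⟩).repr f) (by
      funext j
      have hj := DFunLike.congr_fun hsum (Additive.ofMul (v j))
      rw [h0 (v j) ⟨j, rfl⟩, AddMonoidHom.finsetSum_apply] at hj
      rw [Finset.sum_apply]
      exact hj)
    rw [← hsum]
    exact Finset.sum_eq_zero fun i _ => by rw [hc i, zero_smul]
  have hcard : Nat.card (Φ ⁻¹' S) ≤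
      Nat.card {v : Fin k → G // Subgroup.closure (Set.range v) = ⊤} :=
    Nat.card_le_card_of_injective
      (fun v => (⟨fun j => (v.1 j).toMul, hgen _ v.2⟩ :
        {v : Fin k → G // Subgroup.closure (Set.range v) = ⊤}))
      fun v w h => Subtype.ext (Subtype.mk.inj h)
  have hratio : (Nat.card (Φ ⁻¹' S) : ℝ) / (Nat.card G : ℝ) ^ k =
      ∏ p : (Nat.card G).primeFactors,
        ((Nat.card {m : Fin (d p) → Fin k → ZMod p // LinearIndependent (ZMod p) m} : ℝ) /
          Nat.card (Fin (d p) → Fin k → ZMod p)) := by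
    have hS : Nat.card S = ∏ p : (Nat.card G).primeFactors,
        Nat.card {m : Fin (d p) → Fin k → ZMod p // LinearIndependent (ZMod p) m} := by
      rw [← Nat.card_pi]
      exact Nat.card_congr (Equiv.subtypePiEquivPi
        (p := fun p (m : Fin (d p) → Fin k → ZMod p) => LinearIndependent (ZMod p) m))
    have hmul := Φ.card_preimage_mul_card hΦ S
    have hGk : Nat.card (Fin k → Additive G) = Nat.card G ^ k := by
      rw [Nat.card_fun, Nat.card_fin]; rfl
    rw [hGk] at hmul
    rw [Finset.prod_div_distrib, ← Nat.cast_prod, ← Nat.cast_prod, ← hS, ← Nat.card_pi,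
      div_eq_div_iff (pow_ne_zero k (by exact_mod_cast Nat.card_pos.ne'))
        (by exact_mod_cast Nat.card_pos.ne')]
    exact_mod_cast hmul
  calc _ = ∏ p : (Nat.card G).primeFactors, ∏ j ∈ Finset.range (Group.rank G),
        (1 - ((p : ℕ) : ℝ) ^ ((j : ℤ) - (k : ℤ))) := (Finset.prod_coe_sort _ fun p : ℕ =>
          ∏ j ∈ Finset.range (Group.rank G), (1 - (p : ℝ) ^ ((j : ℤ) - (k : ℤ)))).symm
    _ ≤ (Nat.card (Φ ⁻¹' S) : ℝ) / (Nat.card G : ℝ) ^ k := by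
      rw [hratio]
      refine Finset.prod_le_prod (fun p _ => Finset.prod_nonneg fun j hj => ?_) fun p _ =>
        prod_range_one_sub_zpow_le_card_linearIndependent_div (finrank_addHom_zmod_le_rank G p) hk
      have := Finset.mem_range.1 hj
      exact sub_nonneg.2 (zpow_le_one_of_nonpos₀
        (by exact_mod_cast (hprime p).out.one_le) (by omega))
    _ ≤ genProb G k := by
      unfold genProb
      gcongr
end
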